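/- With the sampled-measure drifted setup, the noiseless drifted estimator Ŷ^noiseless := L(X) + Ȳ + ⟨Z̄, D⟩ + ½ tr(M̄ (I + D Dᵀ)) is 𝒢-measurable (so its conditional variance given 𝒢 under P is zero), and its bias satisfies E_P[V(X) − Ŷ^noiseless | 𝒢] = E_Q[δ | 𝒢] almost surely, where Q := P.withDensity(exp(−½‖D‖² + ⟨D, W^P⟩)). -/

import Mathlib

open MeasureTheory ProbabilityTheory Matrix

/-- The standard Gaussian measure on `ℝⁿ` (coordinates i.i.d. `N(0,1)`). -/
noncomputable def stdGaussian (n : ℕ) : Measure (Fin n → ℝ) :=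
  Measure.pi fun _ => gaussianReal 0 1

/-- The gradient of `f : ℝⁿ → ℝ`, as a vector of partial derivatives. -/
noncomputable def grad {n : ℕ} (f : (Fin n → ℝ) → ℝ) (x : Fin n → ℝ) : Fin n → ℝ :=
  fun i => fderiv ℝ f x (Pi.single i 1)

/-- The Hessian matrix of `f : ℝⁿ → ℝ`. -/
noncomputable def hess {n : ℕ} (f : (Fin n → ℝ) → ℝ) (x : Fin n → ℝ) :
    Matrix (Fin n) (Fin n) ℝ :=
  Matrix.of fun i j => fderiv ℝ (fun y => fderiv ℝ f y (Pi.single j 1)) x (Pi.single i 1)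

/-!
Under `Q` the shifted noise `W^Q = W^P - D` is standard Gaussian and independent of `𝒢`: given a
value `d` of `D`, the Girsanov density turns `N(0, I)` into `N(d, I)`. Hence conditioning on `𝒢`
under `Q` freezes every `𝒢`-measurable quantity and integrates `W^Q` against `γ`. Since
`Σ(X) D = F(X) - K`, the drift cancels in `X' = X + F(X) + Σ(X) W^Q`, so the `V'` part of `δ`
averages to `V(X) - L(X)`. The quadratic part is a polynomial in `W^P = W^Q + D`, and the
Gaussian moments `E W^Q = 0`, `E W^Q (W^Q)ᵀ = I` average it to
`Ȳ + ⟨Z̄, D⟩ + ½ tr(M̄ (I + D Dᵀ))`.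
-/

open scoped ENNReal

section GaussianShift

lemma pi_withDensity {ι : Type*} [Fintype ι] {α : ι → Type*} [∀ i, MeasurableSpace (α i)]
    (μ : ∀ i, Measure (α i)) [∀ i, IsProbabilityMeasure (μ i)] {f : ∀ i, α i → ℝ≥0∞}
    (hf : ∀ i, Measurable (f i)) [∀ i, SigmaFinite ((μ i).withDensity (f i))] :
    (Measure.pi μ).withDensity (fun x => ∏ i, f i (x i)) =
      Measure.pi fun i => (μ i).withDensity (f i) := by
  refine (Measure.pi_eq fun s hs => ?_).symm
  have hg (i) : Measurable ((s i).indicator (f i)) := (hf i).indicator (hs i)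
  have hindep := iIndepFun_pi (μ := μ) fun i => (hg i).aemeasurable
  calc (Measure.pi μ).withDensity (fun x => ∏ i, f i (x i)) (Set.univ.pi s)
      = ∫⁻ x, ∏ i, (s i).indicator (f i) (x i) ∂Measure.pi μ := by
        rw [withDensity_apply _ (.univ_pi hs), ← lintegral_indicator (.univ_pi hs)]
        congr with x
        by_cases hx : ∀ i, x i ∈ s i
        · simp [Set.indicator, hx]
        · obtain ⟨i, hi⟩ := not_forall.mp hx
          rw [Set.indicator_of_notMem (by simpa using hx),
            Finset.prod_eq_zero (Finset.mem_univ i) (Set.indicator_of_notMem hi _)]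
    _ = ∏ i, ∫⁻ x, (s i).indicator (f i) (x i) ∂Measure.pi μ :=
        lintegral_prod_eq_prod_lintegral_of_indepFun _ _ hindep fun i =>
          (hg i).comp (measurable_pi_apply i)
    _ = ∏ i, (μ i).withDensity (f i) (s i) := by
        refine Finset.prod_congr rfl fun i _ => ?_
        rw [(measurePreserving_eval μ i).lintegral_comp (hg i), lintegral_indicator (hs i),
          withDensity_apply _ (hs i)]

lemma gaussianReal_withDensity_exp (d : ℝ) :
    (gaussianReal 0 1).withDensity
      (fun w => ENNReal.ofReal (Real.exp (-(1 / 2) * d ^ 2 + d * w))) = gaussianReal d 1 := by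
  rw [gaussianReal_of_var_ne_zero _ one_ne_zero, gaussianReal_of_var_ne_zero _ one_ne_zero,
    ← withDensity_mul _ (by fun_prop) (by fun_prop)]
  congr with w
  simp only [Pi.mul_apply, gaussianPDF, gaussianPDFReal]
  rw [← ENNReal.ofReal_mul (by positivity), mul_assoc, ← Real.exp_add]
  congr 3
  push_cast
  ring

/-- The standard Gaussian measure on `κ → ℝ`: the `stdGaussian` of the statement with an arbitrary
finite index type in place of `Fin n`. -/
noncomputable abbrev stdGaussianPi (κ : Type*) [Fintype κ] : Measure (κ → ℝ) :=
  Measure.pi fun _ => gaussianReal 0 1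

variable {κ : Type*} [Fintype κ]

/-- The density at the noise `w` of the one-step Girsanov change of measure with drift `d`,
`exp (-½‖d‖² + ⟨d, w⟩)`. -/
noncomputable def girsanovDensity (d w : κ → ℝ) : ℝ≥0∞ :=
  ENNReal.ofReal (Real.exp (-(1 / 2) * ∑ i, d i ^ 2 + ∑ i, d i * w i))

lemma girsanovDensity_eq_prod (d w : κ → ℝ) :
    girsanovDensity d w =
      ∏ i, ENNReal.ofReal (Real.exp (-(1 / 2) * d i ^ 2 + d i * w i)) := by
  rw [girsanovDensity, ← ENNReal.ofReal_prod_of_nonneg fun i _ => (Real.exp_pos _).le,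
    ← Real.exp_sum, Finset.sum_add_distrib, Finset.mul_sum]

lemma girsanovDensity_ne_zero (d w : κ → ℝ) : girsanovDensity d w ≠ 0 := by
  simpa [girsanovDensity] using Real.exp_pos _

lemma measurable_girsanovDensity {A : Type*} {_ : MeasurableSpace A} {d w : A → κ → ℝ}
    (hd : Measurable d) (hw : Measurable w) : Measurable fun a => girsanovDensity (d a) (w a) := by
  unfold girsanovDensity
  fun_prop

lemma stdGaussianPi_withDensity_girsanovDensity (d : κ → ℝ) :
    (stdGaussianPi κ).withDensity (girsanovDensity d) =
      Measure.pi fun i => gaussianReal (d i) 1 := by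
  have : ∀ i, IsProbabilityMeasure ((gaussianReal 0 1).withDensity
      fun w => ENNReal.ofReal (Real.exp (-(1 / 2) * d i ^ 2 + d i * w))) := fun i => by
    rw [gaussianReal_withDensity_exp]
    infer_instance
  rw [funext (girsanovDensity_eq_prod d)]
  refine (pi_withDensity (fun _ => gaussianReal 0 1)
    (f := fun i w => ENNReal.ofReal (Real.exp (-(1 / 2) * d i ^ 2 + d i * w)))
    fun i => by fun_prop).trans ?_
  simp_rw [gaussianReal_withDensity_exp]

lemma map_sub_withDensity_girsanovDensity_stdGaussianPi (d : κ → ℝ) :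
    ((stdGaussianPi κ).withDensity (girsanovDensity d)).map (fun w => w - d) =
      stdGaussianPi κ := by
  have : ∀ i, IsProbabilityMeasure ((gaussianReal (d i) 1).map (· - d i)) :=
    fun i => Measure.isProbabilityMeasure_map (by fun_prop)
  rw [stdGaussianPi_withDensity_girsanovDensity]
  refine (Measure.pi_map_pi (f := fun i x => x - d i) fun i => by fun_prop).trans ?_
  simp [gaussianReal_map_sub_const]

end GaussianShift

section Girsanov

variable {Ω A κ : Type*} [Fintype κ] {mΩ : MeasurableSpace Ω} {mA : MeasurableSpace A}
  {d : A → κ → ℝ}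

lemma map_withDensity_comp {P : Measure Ω} {T : Ω → A} (hT : Measurable T) {f : A → ℝ≥0∞}
    (hf : Measurable f) : (P.withDensity fun ω => f (T ω)).map T = (P.map T).withDensity f := by
  ext s hs
  rw [Measure.map_apply hT hs, withDensity_apply _ (hT hs), withDensity_apply _ hs,
    setLIntegral_map hs hf hT]

lemma map_withDensity_girsanovDensity_prod (μ : Measure A) [SFinite μ] (hd : Measurable d) :
    ((μ.prod (stdGaussianPi κ)).withDensity fun p => girsanovDensity (d p.1) p.2).map
      (fun p => (p.1, p.2 - d p.1)) = μ.prod (stdGaussianPi κ) := by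
  have hZ : Measurable fun p : A × (κ → ℝ) => girsanovDensity (d p.1) p.2 :=
    measurable_girsanovDensity (by fun_prop) measurable_snd
  refine Measure.ext_of_lintegral _ fun h hh => ?_
  have hh' : Measurable fun p : A × (κ → ℝ) => h (p.1, p.2 - d p.1) := by fun_prop
  rw [lintegral_map hh (by fun_prop), lintegral_withDensity_eq_lintegral_mul _ hZ hh',
    lintegral_prod _ (hZ.mul hh').aemeasurable, lintegral_prod _ hh.aemeasurable]
  refine lintegral_congr fun a => ?_
  have hZa : Measurable (girsanovDensity (d a)) :=
    measurable_girsanovDensity measurable_const measurable_id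
  conv_rhs => rw [← map_sub_withDensity_girsanovDensity_stdGaussianPi (d a)]
  rw [lintegral_map (by fun_prop) (by fun_prop),
    lintegral_withDensity_eq_lintegral_mul _ hZa (by fun_prop)]
  rfl

variable {P : Measure Ω} [IsProbabilityMeasure P] {G : Ω → A} {W : Ω → κ → ℝ}

lemma map_withDensity_girsanovDensity (hG : Measurable G) (hW : Measurable W)
    (hlaw : P.map W = stdGaussianPi κ) (hindep : IndepFun G W P) (hd : Measurable d) :
    (P.withDensity fun ω => girsanovDensity (d (G ω)) (W ω)).map
      (fun ω => (G ω, W ω - d (G ω))) = (P.map G).prod (stdGaussianPi κ) := by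
  have hGW : Measurable fun ω => (G ω, W ω) := hG.prodMk hW
  calc _ = ((P.withDensity fun ω => girsanovDensity (d (G ω)) (W ω)).map
          fun ω => (G ω, W ω)).map fun p => (p.1, p.2 - d p.1) := by
        rw [Measure.map_map (by fun_prop) hGW]; rfl
    _ = ((P.map fun ω => (G ω, W ω)).withDensity fun p => girsanovDensity (d p.1) p.2).map
          fun p => (p.1, p.2 - d p.1) := by
        rw [← map_withDensity_comp hGW
          (measurable_girsanovDensity (d := fun p : A × (κ → ℝ) => d p.1)
            (by fun_prop) measurable_snd)]
    _ = (P.map G).prod (stdGaussianPi κ) := by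
        rw [hindep.map_prod_eq_prod_map_map hG.aemeasurable hW.aemeasurable, hlaw,
          map_withDensity_girsanovDensity_prod _ hd]

lemma isProbabilityMeasure_withDensity_girsanovDensity (hG : Measurable G) (hW : Measurable W)
    (hlaw : P.map W = stdGaussianPi κ) (hindep : IndepFun G W P) (hd : Measurable d) :
    IsProbabilityMeasure (P.withDensity fun ω => girsanovDensity (d (G ω)) (W ω)) := by
  have := Measure.isProbabilityMeasure_map (μ := P) hG.aemeasurable
  refine (Measure.isProbabilityMeasure_map_iff (f := fun ω => (G ω, W ω - d (G ω)))
    (by fun_prop)).mp ?_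
  rw [map_withDensity_girsanovDensity hG hW hlaw hindep hd]
  infer_instance

end Girsanov

section Freezing

variable {Ω A E : Type*} {mΩ : MeasurableSpace Ω} {mA : MeasurableSpace A}
  {mE : MeasurableSpace E} {Q : Measure Ω} {G : Ω → A} {W : Ω → E} {μ : Measure A} {ν : Measure E}
  {F : Type*} [NormedAddCommGroup F] {f : A × E → F}

lemma map_fst_eq_of_map_prodMk_eq_prod [IsProbabilityMeasure ν] (hG : Measurable G)
    (hW : Measurable W) (hlaw : Q.map (fun ω => (G ω, W ω)) = μ.prod ν) : Q.map G = μ := by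
  have h := Measure.map_fst_prod (μ := μ) (ν := ν)
  rwa [← hlaw, Measure.map_map measurable_fst (hG.prodMk hW), measure_univ, one_smul] at h

lemma ae_integrable_of_map_prodMk_eq_prod [SFinite μ] [IsProbabilityMeasure ν] (hG : Measurable G)
    (hW : Measurable W) (hlaw : Q.map (fun ω => (G ω, W ω)) = μ.prod ν) (hf : StronglyMeasurable f)
    (hint : Integrable (fun ω => f (G ω, W ω)) Q) :
    ∀ᵐ ω ∂Q, Integrable (fun w => f (G ω, w)) ν := by
  have hprod : Integrable f (μ.prod ν) := by
    rw [← hlaw]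
    exact (integrable_map_measure hf.aestronglyMeasurable (hG.prodMk hW).aemeasurable).mpr hint
  have hae := hprod.prod_right_ae
  rw [← map_fst_eq_of_map_prodMk_eq_prod hG hW hlaw] at hae
  exact ae_of_ae_map hG.aemeasurable hae

lemma condExp_ae_eq_integral_of_map_prodMk_eq_prod [StandardBorelSpace E] [Nonempty E]
    [IsFiniteMeasure Q] [IsProbabilityMeasure ν] [NormedSpace ℝ F] [CompleteSpace F]
    (hG : Measurable G) (hW : Measurable W) (hlaw : Q.map (fun ω => (G ω, W ω)) = μ.prod ν)
    (hf : StronglyMeasurable f) (hint : Integrable (fun ω => f (G ω, W ω)) Q) :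
    Q[fun ω => f (G ω, W ω) | mA.comap G] =ᵐ[Q] fun ω => ∫ w, f (G ω, w) ∂ν := by
  have hcond : condDistrib W G Q =ᵐ[Q.map G] Kernel.const A ν := by
    refine condDistrib_ae_eq_of_measure_eq_compProd G hW.aemeasurable ?_
    rw [Measure.compProd_const, hlaw, map_fst_eq_of_map_prodMk_eq_prod hG hW hlaw]
  filter_upwards [condExp_prod_ae_eq_integral_condDistrib hG hW.aemeasurable hf hint,
    ae_of_ae_map hG.aemeasurable hcond] with ω hω hconst
  rw [hω, hconst, Kernel.const_apply]

end Freezing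

section GaussianMoments

variable {κ : Type*} [Fintype κ]

lemma integrable_eval_stdGaussianPi (i : κ) : Integrable (fun w => w i) (stdGaussianPi κ) :=
  integrable_eval (memLp_one_iff_integrable.mp (memLp_id_gaussianReal 1))

lemma integral_eval_stdGaussianPi (i : κ) : ∫ w, w i ∂stdGaussianPi κ = 0 := by
  rw [integral_eval, integral_id_gaussianReal]

lemma integral_sq_gaussianReal_zero (v : NNReal) : ∫ x, x ^ 2 ∂gaussianReal 0 v = v := by
  have h := variance_id_gaussianReal (μ := 0) (v := v)
  rwa [variance_of_integral_eq_zero aemeasurable_id integral_id_gaussianReal] at h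

lemma indepFun_eval_stdGaussianPi {i j : κ} (hij : i ≠ j) :
    IndepFun (fun w => w i) (fun w => w j) (stdGaussianPi κ) :=
  (iIndepFun_pi (X := fun _ x => x) fun _ => aemeasurable_id).indepFun hij

lemma integrable_eval_mul_eval_stdGaussianPi (i j : κ) :
    Integrable (fun w => w i * w j) (stdGaussianPi κ) := by
  obtain rfl | hij := eq_or_ne i j
  · simpa only [← sq, id_eq] using
      integrable_comp_eval (μ := fun _ : κ => gaussianReal 0 1) (i := i)
        (memLp_id_gaussianReal 2).integrable_sq
  · exact (indepFun_eval_stdGaussianPi hij).integrable_mul (integrable_eval_stdGaussianPi i)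
      (integrable_eval_stdGaussianPi j)

lemma integral_eval_mul_eval_stdGaussianPi [DecidableEq κ] (i j : κ) :
    ∫ w, w i * w j ∂stdGaussianPi κ = (1 : Matrix κ κ ℝ) i j := by
  obtain rfl | hij := eq_or_ne i j
  · simp_rw [← sq]
    rw [integral_comp_eval (μ := fun _ : κ => gaussianReal 0 1) (i := i) (f := fun x => x ^ 2)
      (by fun_prop), integral_sq_gaussianReal_zero, one_apply_eq, NNReal.coe_one]
  · rw [(indepFun_eval_stdGaussianPi hij).integral_fun_mul_eq_mul_integral
      (integrable_eval_stdGaussianPi i).aestronglyMeasurable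
      (integrable_eval_stdGaussianPi j).aestronglyMeasurable, integral_eval_stdGaussianPi,
      zero_mul, one_apply_ne hij]

lemma integrable_dotProduct_stdGaussianPi (z : κ → ℝ) :
    Integrable (fun w => z ⬝ᵥ w) (stdGaussianPi κ) :=
  integrable_finsetSum _ fun i _ => (integrable_eval_stdGaussianPi i).const_mul (z i)

lemma integral_dotProduct_stdGaussianPi (z : κ → ℝ) : ∫ w, z ⬝ᵥ w ∂stdGaussianPi κ = 0 := by
  simp only [dotProduct]
  rw [integral_finsetSum _ fun i _ => (integrable_eval_stdGaussianPi i).const_mul (z i)]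
  simp [integral_const_mul, integral_eval_stdGaussianPi]

lemma dotProduct_mulVec_eq_sum (M : Matrix κ κ ℝ) (w : κ → ℝ) :
    w ⬝ᵥ M *ᵥ w = ∑ i, ∑ j, M i j * (w i * w j) := by
  simp only [dotProduct, mulVec, Finset.mul_sum]
  exact Finset.sum_congr rfl fun i _ => Finset.sum_congr rfl fun j _ => mul_left_comm ..

lemma integrable_dotProduct_mulVec_stdGaussianPi (M : Matrix κ κ ℝ) :
    Integrable (fun w => w ⬝ᵥ M *ᵥ w) (stdGaussianPi κ) := by
  simp_rw [dotProduct_mulVec_eq_sum]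
  exact integrable_finsetSum _ fun i _ => integrable_finsetSum _ fun j _ =>
    (integrable_eval_mul_eval_stdGaussianPi i j).const_mul (M i j)

lemma integral_dotProduct_mulVec_stdGaussianPi (M : Matrix κ κ ℝ) :
    ∫ w, w ⬝ᵥ M *ᵥ w ∂stdGaussianPi κ = M.trace := by
  classical
  have hint (i j) := (integrable_eval_mul_eval_stdGaussianPi i j).const_mul (M i j)
  simp_rw [dotProduct_mulVec_eq_sum]
  rw [integral_finsetSum _ fun i _ => integrable_finsetSum _ fun j _ => hint i j]
  simp_rw [integral_finsetSum _ fun j _ => hint _ j, integral_const_mul,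
    integral_eval_mul_eval_stdGaussianPi, one_apply, mul_ite, mul_one, mul_zero]
  simp [trace]

end GaussianMoments

section QuadraticExpansion

variable {κ : Type*} [Fintype κ]

/-- The second-order expansion `y + ⟨z, w⟩ + ½⟨w, M w⟩` in the noise `w`; the error term `δ` is
`V'` at the next state minus this polynomial. The matrix `M` need not be symmetric. -/
noncomputable def quadraticExpansion (y : ℝ) (z : κ → ℝ) (M : Matrix κ κ ℝ) (w : κ → ℝ) : ℝ :=
  y + z ⬝ᵥ w + 1 / 2 * (w ⬝ᵥ M *ᵥ w)

lemma quadraticExpansion_add (y : ℝ) (z : κ → ℝ) (M : Matrix κ κ ℝ) (w d : κ → ℝ) :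
    quadraticExpansion y z M (w + d) =
      quadraticExpansion (quadraticExpansion y z M d)
        (z + (1 / 2 : ℝ) • (M *ᵥ d + d ᵥ* M)) M w := by
  simp only [quadraticExpansion, mulVec_add, dotProduct_add, add_dotProduct, smul_dotProduct,
    smul_eq_mul, dotProduct_mulVec d M w, dotProduct_comm (M *ᵥ d) w]
  ring

lemma quadraticExpansion_add_half_trace [DecidableEq κ] (y : ℝ) (z : κ → ℝ) (M : Matrix κ κ ℝ)
    (d : κ → ℝ) :
    quadraticExpansion y z M d + 1 / 2 * M.trace =
      y + z ⬝ᵥ d + 1 / 2 * (M * (1 + vecMulVec d d)).trace := by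
  rw [quadraticExpansion, mul_add, mul_one, trace_add, mul_vecMulVec, trace_vecMulVec,
    dotProduct_comm (M *ᵥ d) d]
  ring

lemma integrable_quadraticExpansion (y : ℝ) (z : κ → ℝ) (M : Matrix κ κ ℝ) :
    Integrable (quadraticExpansion y z M) (stdGaussianPi κ) :=
  ((integrable_const y).add (integrable_dotProduct_stdGaussianPi z)).add
    ((integrable_dotProduct_mulVec_stdGaussianPi M).const_mul _)

lemma integral_quadraticExpansion (y : ℝ) (z : κ → ℝ) (M : Matrix κ κ ℝ) :
    ∫ w, quadraticExpansion y z M w ∂stdGaussianPi κ = y + 1 / 2 * M.trace := by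
  have haffine : Integrable (fun w => y + z ⬝ᵥ w) (stdGaussianPi κ) :=
    (integrable_const y).add (integrable_dotProduct_stdGaussianPi z)
  unfold quadraticExpansion
  rw [integral_add haffine ((integrable_dotProduct_mulVec_stdGaussianPi M).const_mul _),
    integral_add (integrable_const y) (integrable_dotProduct_stdGaussianPi z), integral_const_mul,
    integral_dotProduct_stdGaussianPi, integral_dotProduct_mulVec_stdGaussianPi]
  simp

lemma integrable_quadraticExpansion_add (y : ℝ) (z : κ → ℝ) (M : Matrix κ κ ℝ) (d : κ → ℝ) :
    Integrable (fun w => quadraticExpansion y z M (w + d)) (stdGaussianPi κ) := by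
  simp_rw [quadraticExpansion_add]
  exact integrable_quadraticExpansion ..

lemma integral_quadraticExpansion_add [DecidableEq κ] (y : ℝ) (z : κ → ℝ) (M : Matrix κ κ ℝ)
    (d : κ → ℝ) :
    ∫ w, quadraticExpansion y z M (w + d) ∂stdGaussianPi κ =
      y + z ⬝ᵥ d + 1 / 2 * (M * (1 + vecMulVec d d)).trace := by
  simp_rw [quadraticExpansion_add]
  rw [integral_quadraticExpansion, quadraticExpansion_add_half_trace]

end QuadraticExpansion

section Measurability

variable {A : Type*} {mA : MeasurableSpace A} {ι κ : Type*} [Fintype κ]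

lemma measurable_mulVec {T : A → Matrix ι κ ℝ} (hT : ∀ i j, Measurable fun a => T a i j)
    {v : A → κ → ℝ} (hv : Measurable v) : Measurable fun a => T a *ᵥ v a :=
  measurable_pi_lambda _ fun i => by
    simp only [mulVec, dotProduct]
    fun_prop

lemma measurable_matrix_mul_apply {ι' : Type*} {T : A → Matrix ι κ ℝ} {U : A → Matrix κ ι' ℝ}
    (hT : ∀ i j, Measurable fun a => T a i j) (hU : ∀ i j, Measurable fun a => U a i j)
    (i : ι) (j : ι') : Measurable fun a => (T a * U a) i j := by
  simp only [mul_apply]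
  fun_prop

lemma measurable_matrix_trace {T : A → Matrix κ κ ℝ} (hT : ∀ i j, Measurable fun a => T a i j) :
    Measurable fun a => (T a).trace :=
  Finset.measurable_sum _ fun i _ => hT i i

lemma measurable_det [DecidableEq κ] {T : A → Matrix κ κ ℝ}
    (hT : ∀ i j, Measurable fun a => T a i j) : Measurable fun a => (T a).det := by
  simp only [det_apply']
  fun_prop

lemma measurable_matrix_inv_apply [DecidableEq κ] {T : A → Matrix κ κ ℝ}
    (hT : ∀ i j, Measurable fun a => T a i j) (i j : κ) : Measurable fun a => (T a)⁻¹ i j := by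
  simp only [inv_def, Ring.inverse_eq_inv', Matrix.smul_apply, smul_eq_mul,
    adjugate_apply]
  refine (measurable_det hT).inv.mul (measurable_det fun k l => ?_)
  obtain rfl | hk := eq_or_ne k j
  · simp only [updateRow_self, measurable_const]
  · simpa only [updateRow_ne hk] using hT k l

lemma measurable_quadraticExpansion {y : A → ℝ} {z w : A → κ → ℝ} {M : A → Matrix κ κ ℝ}
    (hy : Measurable y) (hz : Measurable z) (hM : ∀ i j, Measurable fun a => M a i j)
    (hw : Measurable w) : Measurable fun a => quadraticExpansion (y a) (z a) (M a) (w a) := by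
  have hMw := measurable_mulVec hM hw
  unfold quadraticExpansion dotProduct
  fun_prop

lemma measurable_grad {n : ℕ} (f : (Fin n → ℝ) → ℝ) : Measurable (grad f) :=
  measurable_pi_lambda _ fun _ => measurable_fderiv_apply_const ℝ f _

lemma measurable_hess_apply {n : ℕ} (f : (Fin n → ℝ) → ℝ) (i j : Fin n) :
    Measurable fun x => hess f x i j :=
  measurable_fderiv_apply_const ℝ _ _

end Measurability

section ConditionalGirsanov

variable {Ω κ : Type*} [Fintype κ] {𝒢 mΩ : MeasurableSpace Ω} {P : Measure Ω}
  {W D : Ω → κ → ℝ}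

lemma withDensity_girsanovDensity_absolutelyContinuous (hW : Measurable W) (hD : Measurable D) :
    P ≪ P.withDensity fun ω => girsanovDensity (D ω) (W ω) :=
  withDensity_absolutelyContinuous' (measurable_girsanovDensity hD hW).aemeasurable
    (.of_forall fun ω => girsanovDensity_ne_zero (D ω) (W ω))

lemma condExp_withDensity_girsanovDensity [IsProbabilityMeasure P] (h𝒢 : 𝒢 ≤ mΩ) (hW : Measurable W)
    (hlaw : P.map W = stdGaussianPi κ)
    (hindep : Indep (MeasurableSpace.comap W inferInstance) 𝒢 P) (hD : Measurable[𝒢] D)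
    {E : Type*} [NormedAddCommGroup E] [NormedSpace ℝ E] [CompleteSpace E]
    {f : Ω × (κ → ℝ) → E} (hf : StronglyMeasurable[𝒢.prod inferInstance] f)
    (hint : Integrable (fun ω => f (ω, W ω - D ω))
      (P.withDensity fun ω => girsanovDensity (D ω) (W ω))) :
    ∀ᵐ ω ∂P, Integrable (fun w => f (ω, w)) (stdGaussianPi κ) ∧
      ((P.withDensity fun ω => girsanovDensity (D ω) (W ω))[fun ω => f (ω, W ω - D ω)|𝒢]) ω =
        ∫ w, f (ω, w) ∂stdGaussianPi κ := by
  have hG : @Measurable Ω Ω mΩ 𝒢 id := measurable_id'' h𝒢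
  have hGW : @IndepFun Ω Ω (κ → ℝ) mΩ 𝒢 _ id W P := by
    rw [@IndepFun_iff_Indep _ _ _ _ 𝒢, MeasurableSpace.comap_id]
    exact hindep.symm
  have hWQ : Measurable fun ω => W ω - D ω := hW.sub (hD.mono h𝒢 le_rfl)
  have hjoint := map_withDensity_girsanovDensity hG hW hlaw hGW hD
  have := isProbabilityMeasure_withDensity_girsanovDensity hG hW hlaw hGW hD
  have hfreeze := condExp_ae_eq_integral_of_map_prodMk_eq_prod hG hWQ hjoint hf hint
  rw [MeasurableSpace.comap_id] at hfreeze
  exact withDensity_girsanovDensity_absolutelyContinuous hW (hD.mono h𝒢 le_rfl)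
    ((ae_integrable_of_map_prodMk_eq_prod hG hWQ hjoint hf hint).and hfreeze)

end ConditionalGirsanov

section Estimator

lemma condVar_eq_zero_of_stronglyMeasurable {Ω : Type*} {𝒢 mΩ : MeasurableSpace Ω} {P : Measure Ω}
    (h𝒢 : 𝒢 ≤ mΩ) [SigmaFinite (P.trim h𝒢)] {Y : Ω → ℝ} (hY : StronglyMeasurable[𝒢] Y)
    (hint : Integrable Y P) : Var[Y; P | 𝒢] = 0 := by
  rw [condVar, condExp_of_stronglyMeasurable h𝒢 hY hint]
  simp only [sub_self, zero_pow two_ne_zero, condExp_zero]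

variable {ι κ : Type*} [Fintype κ]

/-- The error `V'(x + S w) - (y + ⟨z, w⟩ + ½⟨w, M w⟩)` of the quadratic approximation of the
next-step value, as a function of the noise `w`. The paper's `δ` is its value at the state
`x = X̄^P` and noise `w = W^P`; the coefficients `y`, `z`, `M` are arbitrary, not those of a Taylor
expansion of some `Ṽ`. -/
noncomputable def expansionError (V' : (ι → ℝ) → ℝ) (x : ι → ℝ) (S : Matrix ι κ ℝ) (y : ℝ)
    (z : κ → ℝ) (M : Matrix κ κ ℝ) (w : κ → ℝ) : ℝ :=
  V' (x + S *ᵥ w) - quadraticExpansion y z M w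

lemma measurable_expansionError {A : Type*} {_ : MeasurableSpace A} {V' : (ι → ℝ) → ℝ}
    (hV' : Measurable V') {x : A → ι → ℝ} (hx : Measurable x) {S : A → Matrix ι κ ℝ}
    (hS : ∀ i j, Measurable fun a => S a i j) {y : A → ℝ} (hy : Measurable y) {z w : A → κ → ℝ}
    (hz : Measurable z) {M : A → Matrix κ κ ℝ} (hM : ∀ i j, Measurable fun a => M a i j)
    (hw : Measurable w) :
    Measurable fun a => expansionError V' (x a) (S a) (y a) (z a) (M a) (w a) :=
  (hV'.comp (hx.add (measurable_mulVec hS hw))).sub (measurable_quadraticExpansion hy hz hM hw)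

lemma integral_expansionError_add [DecidableEq κ] {k b : ι → ℝ} {S : Matrix ι κ ℝ} {d : κ → ℝ}
    (hd : S *ᵥ d = b - k) (V' : (ι → ℝ) → ℝ) (x : ι → ℝ) (y : ℝ) (z : κ → ℝ) (M : Matrix κ κ ℝ)
    (hint : Integrable (fun w => expansionError V' (x + k) S y z M (w + d)) (stdGaussianPi κ)) :
    ∫ w, expansionError V' (x + k) S y z M (w + d) ∂stdGaussianPi κ =
      ∫ w, V' (x + b + S *ᵥ w) ∂stdGaussianPi κ -
        (y + z ⬝ᵥ d + 1 / 2 * (M * (1 + vecMulVec d d)).trace) := by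
  have hnext (w : κ → ℝ) : x + k + S *ᵥ (w + d) = x + b + S *ᵥ w := by
    rw [mulVec_add, hd]
    abel
  have hq := integrable_quadraticExpansion_add y z M d
  simp only [expansionError, hnext] at hint ⊢
  have hV' : Integrable (fun w => V' (x + b + S *ᵥ w)) (stdGaussianPi κ) := by
    simpa only [Pi.add_def, sub_add_cancel] using hint.add hq
  rw [integral_sub hV' hq, integral_quadraticExpansion_add]

lemma condExp_expansionError [DecidableEq κ] {Ω : Type*} {𝒢 mΩ : MeasurableSpace Ω}
    (h𝒢 : 𝒢 ≤ mΩ) {P : Measure Ω} [IsProbabilityMeasure P] {W D : Ω → κ → ℝ} (hW : Measurable W)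
    (hlaw : P.map W = stdGaussianPi κ)
    (hindep : Indep (MeasurableSpace.comap W inferInstance) 𝒢 P) (hD : Measurable[𝒢] D)
    {x k b : Ω → ι → ℝ} {S : Ω → Matrix ι κ ℝ} (hSD : ∀ᵐ ω ∂P, S ω *ᵥ D ω = b ω - k ω)
    {V' : (ι → ℝ) → ℝ} (hV' : Measurable V') (hx : Measurable[𝒢] x) (hk : Measurable[𝒢] k)
    (hS : ∀ i j, Measurable[𝒢] fun ω => S ω i j) {y : Ω → ℝ} (hy : Measurable[𝒢] y)
    {z : Ω → κ → ℝ} (hz : Measurable[𝒢] z) {M : Ω → Matrix κ κ ℝ}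
    (hM : ∀ i j, Measurable[𝒢] fun ω => M ω i j)
    (hint : Integrable (fun ω => expansionError V' (x ω + k ω) (S ω) (y ω) (z ω) (M ω) (W ω))
      (P.withDensity fun ω => girsanovDensity (D ω) (W ω))) :
    (P.withDensity fun ω => girsanovDensity (D ω) (W ω))[
      fun ω => expansionError V' (x ω + k ω) (S ω) (y ω) (z ω) (M ω) (W ω)|𝒢] =ᵐ[P]
    fun ω => ∫ w, V' (x ω + b ω + S ω *ᵥ w) ∂stdGaussianPi κ -
      (y ω + z ω ⬝ᵥ D ω + 1 / 2 * (M ω * (1 + vecMulVec (D ω) (D ω))).trace) := by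
  let f (p : Ω × (κ → ℝ)) : ℝ :=
    expansionError V' (x p.1 + k p.1) (S p.1) (y p.1) (z p.1) (M p.1) (p.2 + D p.1)
  have hf : Measurable[𝒢.prod inferInstance] f :=
    measurable_expansionError hV' ((hx.add hk).comp measurable_fst)
      (fun i j => (hS i j).comp measurable_fst) (hy.comp measurable_fst)
      (hz.comp measurable_fst) (fun i j => (hM i j).comp measurable_fst)
      (measurable_snd.add (hD.comp measurable_fst))
  have hfW : (fun ω => expansionError V' (x ω + k ω) (S ω) (y ω) (z ω) (M ω) (W ω)) =
      fun ω => f (ω, W ω - D ω) := funext fun ω => by simp only [f, sub_add_cancel]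
  rw [hfW] at hint ⊢
  filter_upwards [hSD, condExp_withDensity_girsanovDensity h𝒢 hW hlaw hindep hD
    hf.stronglyMeasurable hint] with ω hω ⟨hfint, hcond⟩
  exact hcond.trans (integral_expansionError_add hω V' (x ω) (y ω) (z ω) (M ω) hfint)

lemma measurable_noiselessEstimator [DecidableEq κ] {A : Type*} {_ : MeasurableSpace A}
    {l y : A → ℝ} (hl : Measurable l) (hy : Measurable y) {z d : A → κ → ℝ} (hz : Measurable z)
    {M : A → Matrix κ κ ℝ} (hM : ∀ i j, Measurable fun a => M a i j) (hd : Measurable d) :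
    Measurable fun a => l a + y a + z a ⬝ᵥ d a +
      1 / 2 * (M a * (1 + vecMulVec (d a) (d a))).trace := by
  have htrace : Measurable fun a => (M a * (1 + vecMulVec (d a) (d a))).trace :=
    measurable_matrix_trace <| measurable_matrix_mul_apply hM fun i j => by
      simp only [Matrix.add_apply, vecMulVec_apply]
      fun_prop
  unfold dotProduct
  fun_prop

lemma measurable_bellman {L : (ι → ℝ) → ℝ} (hL : Measurable L) {F : (ι → ℝ) → ι → ℝ}
    (hF : Measurable F) {S : (ι → ℝ) → Matrix ι κ ℝ} (hS : ∀ i j, Measurable fun x => S x i j)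
    {V' : (ι → ℝ) → ℝ} (hV' : Measurable V') :
    Measurable fun x => L x + ∫ w, V' (x + F x + S x *ᵥ w) ∂stdGaussianPi κ := by
  have hSw : Measurable fun p : (ι → ℝ) × (κ → ℝ) => S p.1 *ᵥ p.2 :=
    measurable_mulVec (fun i j => (hS i j).comp measurable_fst) measurable_snd
  have hV'w : Measurable fun p : (ι → ℝ) × (κ → ℝ) => V' (p.1 + F p.1 + S p.1 *ᵥ p.2) := by
    fun_prop
  exact hL.add hV'w.stronglyMeasurable.integral_prod_right'.measurable

end Estimator

theorem drifted_noiseless_bias_general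
    {Ω ι κ : Type*} [Fintype κ] [DecidableEq κ] {𝒢 mΩ : MeasurableSpace Ω} (h𝒢 : 𝒢 ≤ mΩ)
    {P : Measure Ω} [IsProbabilityMeasure P]
    {W : Ω → κ → ℝ} (hW : Measurable W) (hlaw : P.map W = stdGaussianPi κ)
    (hindep : Indep (MeasurableSpace.comap W inferInstance) 𝒢 P)
    {X K : Ω → ι → ℝ} (hX : Measurable[𝒢] X) (hK : Measurable[𝒢] K)
    {F : (ι → ℝ) → ι → ℝ} (hF : Measurable F)
    {S : (ι → ℝ) → Matrix ι κ ℝ} (hS : ∀ i j, Measurable fun x => S x i j)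
    {L : (ι → ℝ) → ℝ} (hL : Measurable L)
    {D : Ω → κ → ℝ} (hD : Measurable[𝒢] D) (hSD : ∀ᵐ ω ∂P, S (X ω) *ᵥ D ω = F (X ω) - K ω)
    {Q : Measure Ω} (hQ : Q = P.withDensity fun ω => girsanovDensity (D ω) (W ω))
    {V' : (ι → ℝ) → ℝ} (hV' : Measurable V')
    {V : (ι → ℝ) → ℝ}
    (hV : ∀ x, V x = L x + ∫ w, V' (x + F x + S x *ᵥ w) ∂stdGaussianPi κ)
    {Y : Ω → ℝ} (hY : Measurable[𝒢] Y) {Z : Ω → κ → ℝ} (hZ : Measurable[𝒢] Z)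
    {M : Ω → Matrix κ κ ℝ} (hM : ∀ i j, Measurable[𝒢] fun ω => M ω i j)
    {δ : Ω → ℝ}
    (hδ : ∀ ω, δ ω = expansionError V' (X ω + K ω) (S (X ω)) (Y ω) (Z ω) (M ω) (W ω))
    (hδint : Integrable δ Q)
    {Ynl : Ω → ℝ}
    (hYnl : ∀ ω, Ynl ω = L (X ω) + Y ω + Z ω ⬝ᵥ D ω +
      1 / 2 * (M ω * (1 + vecMulVec (D ω) (D ω))).trace)
    (hYnlint : Integrable Ynl P) (hVint : Integrable (fun ω => V (X ω)) P) :
    Measurable[𝒢] Ynl ∧ Var[Ynl; P | 𝒢] =ᵐ[P] 0 ∧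
      P[fun ω => V (X ω) - Ynl ω|𝒢] =ᵐ[P] Q[δ|𝒢] := by
  have hYnl𝒢 : Measurable[𝒢] Ynl := by
    rw [funext hYnl]
    exact measurable_noiselessEstimator (hL.comp hX) hY hZ hM hD
  refine ⟨hYnl𝒢, .of_eq (condVar_eq_zero_of_stronglyMeasurable h𝒢 hYnl𝒢.stronglyMeasurable
    hYnlint), ?_⟩
  have hV𝒢 : Measurable[𝒢] fun ω => V (X ω) - Ynl ω :=
    ((funext hV ▸ measurable_bellman hL hF hS hV').comp hX).sub hYnl𝒢
  subst hQ
  rw [funext hδ, condExp_of_stronglyMeasurable h𝒢 hV𝒢.stronglyMeasurable (hVint.sub hYnlint)]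
  filter_upwards [condExp_expansionError h𝒢 hW hlaw hindep hD hSD hV' hX hK
    (fun i j => (hS i j).comp hX) hY hZ hM (funext hδ ▸ hδint)] with ω hω
  rw [hω, hV, hYnl]
  ring

/-- **The drifted noiseless estimator: measurability and bias under the sampled measure.**
With the sampled-measure drifted setup, the noiseless drifted estimator
`Ŷ^noiseless := L(X) + Ȳ + ⟨Z̄,D⟩ + ½ tr(M̄(I + DDᵀ))` is `𝒢`-measurable (so its conditional
variance given `𝒢` under `P` is zero), and its bias satisfies
`E_P[V(X) − Ŷ^noiseless | 𝒢] = E_Q[δ | 𝒢]` almost surely, where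
`Q := P.withDensity(exp(−½‖D‖² + ⟨D, W^P⟩))`. -/
theorem drifted_noiseless_bias
    {Ω : Type*} (𝒢 : MeasurableSpace Ω) [mΩ : MeasurableSpace Ω]
    (P : Measure Ω) [IsProbabilityMeasure P]
    {n : ℕ} (h𝒢 : 𝒢 ≤ mΩ)
    -- the sampled noise W^P : i.i.d. standard normal coordinates, independent of 𝒢
    (WP : Ω → Fin n → ℝ) (hWPmeas : Measurable WP)
    (hWPlaw : Measure.map WP P = stdGaussian n)
    (hWPindep : Indep (MeasurableSpace.comap WP inferInstance) 𝒢 P)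
    -- the current state X and the drift K are 𝒢-measurable; dynamics data F, Σ, L
    (X K : Ω → Fin n → ℝ) (hX : Measurable[𝒢] X) (hK : Measurable[𝒢] K)
    (F : (Fin n → ℝ) → Fin n → ℝ) (hF : Measurable F)
    (S : (Fin n → ℝ) → Matrix (Fin n) (Fin n) ℝ) (hS : ∀ i j, Measurable fun x => S x i j)
    (hSinv : ∀ᵐ ω ∂P, IsUnit (S (X ω)).det)
    (L : (Fin n → ℝ) → ℝ) (hL : Measurable L)
    -- D := Σ(X)⁻¹ (F(X) − K), bounded; W^Q := W^P − D; X̄^P := X + K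
    (D : Ω → Fin n → ℝ) (hD : ∀ ω, D ω = (S (X ω))⁻¹.mulVec (F (X ω) - K ω))
    (hDbound : ∃ C, ∀ ω i, |D ω i| ≤ C)
    (WQ : Ω → Fin n → ℝ) (hWQ : ∀ ω, WQ ω = WP ω - D ω)
    (XbP : Ω → Fin n → ℝ) (hXbP : ∀ ω, XbP ω = X ω + K ω)
    (X' : Ω → Fin n → ℝ) (hX' : ∀ ω, X' ω = X ω + K ω + (S (X ω)).mulVec (WP ω))
    -- the tilted (on-policy) measure Q
    (Q : Measure Ω)
    (hQ : Q = P.withDensity fun ω =>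
      ENNReal.ofReal (Real.exp (-(1 / 2) * (∑ i, (D ω i) ^ 2) + ∑ i, D ω i * WP ω i)))
    -- the next-step value function V' and the one-step Bellman value V
    (V' : (Fin n → ℝ) → ℝ) (hV'meas : Measurable V')
    (hV'intP : Integrable (fun ω => V' (X' ω)) P)
    (hV'intQ : Integrable (fun ω => V' (X' ω)) Q)
    (V : (Fin n → ℝ) → ℝ)
    (hV : ∀ x, V x = L x + ∫ w, V' (x + F x + (S x).mulVec w) ∂(stdGaussian n))
    -- the C² value function approximation Ṽ and associated Ȳ, Z̄, M̄ (centered at X̄^P)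
    (Vt : (Fin n → ℝ) → ℝ) (hVt : ContDiff ℝ 2 Vt)
    (Zb : Ω → Fin n → ℝ) (hZb : ∀ ω, Zb ω = (S (X ω))ᵀ.mulVec (grad Vt (XbP ω)))
    (Mb : Ω → Matrix (Fin n) (Fin n) ℝ)
    (hMb : ∀ ω, Mb ω = (S (X ω))ᵀ * hess Vt (XbP ω) * S (X ω))
    (hZbintP : ∀ i, Integrable (fun ω => Zb ω i) P)
    (hZbintQ : ∀ i, Integrable (fun ω => Zb ω i) Q)
    (hMbintP : ∀ i j, Integrable (fun ω => Mb ω i j) P)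
    (hMbintQ : ∀ i j, Integrable (fun ω => Mb ω i j) Q)
    -- the error term δ, integrable under both measures
    (δ : Ω → ℝ)
    (hδ : ∀ ω, δ ω = V' (X' ω) - (Vt (XbP ω) + (∑ i, Zb ω i * WP ω i)
      + (1 / 2) * ∑ i, WP ω i * (Mb ω).mulVec (WP ω) i))
    (hδintP : Integrable δ P) (hδintQ : Integrable δ Q)
    -- the noiseless drifted estimator
    (Ynl : Ω → ℝ)
    (hYnl : ∀ ω, Ynl ω = L (X ω) + Vt (XbP ω) + (∑ i, Zb ω i * D ω i)
      + (1 / 2) * Matrix.trace (Mb ω * (1 + Matrix.vecMulVec (D ω) (D ω))))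
    -- integrability of the remaining displayed random variables
    (hYnlint : Integrable Ynl P)
    (hLint : Integrable (fun ω => L (X ω)) P)
    (hVint : Integrable (fun ω => V (X ω)) P) :
    Measurable[𝒢] Ynl ∧
      P[fun ω => (Ynl ω - (P[Ynl|𝒢]) ω) ^ 2|𝒢] =ᵐ[P] 0 ∧
      P[fun ω => V (X ω) - Ynl ω|𝒢] =ᵐ[P] Q[δ|𝒢] := by
  have hS𝒢 (i j) : Measurable[𝒢] fun ω => S (X ω) i j := (hS i j).comp hX
  have hXbP𝒢 : Measurable[𝒢] XbP := funext hXbP ▸ hX.add hK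
  have hD𝒢 : Measurable[𝒢] D :=
    funext hD ▸ measurable_mulVec (measurable_matrix_inv_apply hS𝒢) ((hF.comp hX).sub hK)
  have hZ𝒢 : Measurable[𝒢] Zb :=
    funext hZb ▸ measurable_mulVec (fun i j => hS𝒢 j i) ((measurable_grad Vt).comp hXbP𝒢)
  have hM𝒢 (i j) : Measurable[𝒢] fun ω => Mb ω i j := funext hMb ▸
    measurable_matrix_mul_apply (measurable_matrix_mul_apply (fun i j => hS𝒢 j i)
      fun i j => (measurable_hess_apply Vt i j).comp hXbP𝒢) hS𝒢 i j
  have hSD : ∀ᵐ ω ∂P, S (X ω) *ᵥ D ω = F (X ω) - K ω := by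
    filter_upwards [hSinv] with ω hω
    rw [hD, mulVec_mulVec, mul_nonsing_inv _ hω, one_mulVec]
  exact drifted_noiseless_bias_general h𝒢 hWPmeas hWPlaw hWPindep hX hK hF hS hL hD𝒢 hSD hQ
    hV'meas hV (hVt.continuous.measurable.comp hXbP𝒢) hZ𝒢 hM𝒢
    (fun ω => by rw [hδ, hX']; rfl) hδintQ hYnl hYnlint hVint
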